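/- Let d ≥ 2 and 0 < α < d−1. The α-Riesz perimeter 𝒫^α satisfies assumption (H): for every L > 0 and δ > 0 there exist ε₀ ∈ (0,1) and C(δ,L) > 0 such that for every E ∈ 𝔠_L with osc_{𝕋^{d−1}} f_E ≥ δ one has 𝒫^α(E) − 𝒫^α(E_ε) ≥ C(δ,L) ε for all 0 < ε ≤ ε₀. -/

import Mathlib

open MeasureTheory Filter Set
open scoped ENNReal

noncomputable section

/-- The flat torus `𝕋^{d-1}`. -/
abbrev Torus (d : ℕ) : Type := Fin (d-1) → AddCircle (1:ℝ)

/-- The periodic strip `𝕋^{d-1} × ℝ`. -/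
abbrev Cyl (d : ℕ) : Type := Torus d × ℝ

/-- The subgraph of a function `g : 𝕋^{d-1} → ℝ`. -/
def subgraph (d : ℕ) (g : Torus d → ℝ) : Set (Cyl d) := {x | x.2 ≤ g x.1}

/-- The class `𝔠_L` of periodic `L`-Lipschitz subgraphs. -/
def LipClass (d : ℕ) (L : ℝ) : Set (Set (Cyl d)) :=
  {E | ∃ g : Torus d → ℝ, LipschitzWith (Real.toNNReal L) g ∧ E = subgraph d g}

/-- The slab `𝕊^d_R = 𝕋^{d-1} × (-R, R)`. -/
def SlabR (d : ℕ) (R : ℝ) : Set (Cyl d) := {x | -R < x.2 ∧ x.2 < R}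

/-- The class `𝔐_R` of measurable sets squeezed between two halfspaces. -/
def MR (d : ℕ) (R : ℝ) : Set (Set (Cyl d)) :=
  {E | MeasurableSet E ∧ {x : Cyl d | x.2 < -R} ⊆ E ∧ E ⊆ {x : Cyl d | x.2 < R}}

/-- The periodic halfspace `H_λ = 𝕋^{d-1} × (-∞, λ)`. -/
def halfspace (d : ℕ) (lam : ℝ) : Set (Cyl d) := {x | x.2 < lam}

/-- Translation of `𝕋^{d-1} × ℝ` by a vector `τ ∈ ℝ^d = ℝ^{d-1} × ℝ`,
acting through the quotient. -/
def translCyl (d : ℕ) (τ : (Fin (d-1) → ℝ) × ℝ) (x : Cyl d) : Cyl d :=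
  (fun i => x.1 i + (τ.1 i : AddCircle (1:ℝ)), x.2 + τ.2)

/-- The periodic norm `‖ξ‖_♯ = (|ξ_d|² + min_{z'∈ℤ^{d-1}} |ξ̃' + z'|²)^{1/2}`. -/
def pnorm (d : ℕ) (ξ : Cyl d) : ℝ := Real.sqrt (ξ.2 ^ 2 + ∑ i, ‖ξ.1 i‖ ^ 2)

/-- The Riesz interaction `𝒥^α(E,F) = ∫_E ∫_F ‖x-y‖_♯^{-(d-α)} dy dx`. -/
def Jalpha (d : ℕ) (α : ℝ) (E F : Set (Cyl d)) : ℝ≥0∞ :=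
  ∫⁻ x in E, ∫⁻ y in F, (ENNReal.ofReal (pnorm d (x - y))) ^ (-((d : ℝ) - α)) ∂volume ∂volume

/-- The slab `𝕊^d_{R₁,R₂} = 𝕋^{d-1} × (R₁, R₂)`. -/
def slab2 (d : ℕ) (R₁ R₂ : ℝ) : Set (Cyl d) := {x | R₁ < x.2 ∧ x.2 < R₂}

/-- `𝒫^α_{R₁,R₂}(E) = 𝒥^α(𝕊,𝕊) - 𝒥^α(E∩𝕊, E∩𝕊)`. -/
def PalphaSlab (d : ℕ) (α R₁ R₂ : ℝ) (E : Set (Cyl d)) : ℝ≥0∞ :=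
  Jalpha d α (slab2 d R₁ R₂) (slab2 d R₁ R₂)
    - Jalpha d α (E ∩ slab2 d R₁ R₂) (E ∩ slab2 d R₁ R₂)

/-- `ρ_E < +∞`, i.e. `E` is contained in some halfspace `𝕋^{d-1} × (-∞, ρ)`. -/
def BddTop (d : ℕ) (E : Set (Cyl d)) : Prop := ∃ ρ : ℝ, E ⊆ {x : Cyl d | x.2 < ρ}

/-- `ρ_E = inf {ρ : E ⊆ 𝕋^{d-1} × (-∞, ρ)}`. -/
def rhoSup (d : ℕ) (E : Set (Cyl d)) : ℝ := sInf {ρ : ℝ | E ⊆ {x : Cyl d | x.2 < ρ}}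

open Classical in
/-- The `α`-Riesz perimeter `𝒫^α` (the limits in `R` exist by monotonicity, so they
coincide with the `limsup`). -/
def Palpha (d : ℕ) (α : ℝ) (E : Set (Cyl d)) : ℝ≥0∞ :=
  if E = ∅ then 0
  else if BddTop d E then limsup (fun R : ℝ => PalphaSlab d α (-R) (rhoSup d E) E) atTop
  else limsup (fun R : ℝ => PalphaSlab d α (-R) R E) atTop

/-- Oscillation of a function on the torus. -/
def osc (d : ℕ) (g : Torus d → ℝ) : ℝ := (⨆ x, g x) - (⨅ x, g x)

/-!
Let `M = max g`. Translating `E_ε` upwards by `ε M` does not change its perimeter and turns it into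
the subgraph of `h = (1 - ε) g + ε M`, which satisfies `g ≤ h ≤ M`; so `E` and the translated `E_ε`
are compared inside the same slabs `𝕊_{-R,M}`. There the perimeter drops by at least the
interaction of the region between the two graphs, of volume `ε ∫ (M - g)`, with a slab of height
one below the graph of `g`. Both lie in a slab of height at most `L / 2 + 1`, on which the kernel is
bounded below, and `∫ (M - g)` is bounded below because `M - g ≥ δ / 2` on a ball of radius
`δ / (2 L)` around a minimum point of `g`. Subtracting the energies requires them to be finite,
which holds because `‖z‖_♯ ^ (-(d - α))` is at most the product of the `d` one-dimensional
singularities `|z_i| ^ (-(d - α) / d)`, each of them locally integrable.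
-/

section Integrability

lemma ennreal_rpow_le_rpow_of_nonpos {x y : ℝ≥0∞} {r : ℝ} (hr : r ≤ 0) (h : x ≤ y) :
    y ^ r ≤ x ^ r := by
  rw [← neg_neg r, ENNReal.rpow_neg, ENNReal.rpow_neg x]
  exact ENNReal.inv_le_inv.2 (ENNReal.rpow_le_rpow h (neg_nonneg.2 hr))

lemma setLIntegral_enorm_rpow_lt_top {r : ℝ} (hr : -1 < r) (a b : ℝ) :
    ∫⁻ t in Ioc a b, ‖t‖ₑ ^ r < ⊤ := by
  have hint : IntervalIntegrable (fun t : ℝ => |t| ^ r) volume a b := by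
    refine intervalIntegrable_of_even (fun t => by rw [abs_neg]) fun T hT => ?_
    refine (intervalIntegral.intervalIntegrable_rpow' hr).congr fun t ht => ?_
    rw [uIoc_of_le hT.le] at ht
    simp only [abs_of_pos ht.1]
  refine lt_of_eq_of_lt (lintegral_congr_ae ?_) hint.1.lintegral_lt_top
  filter_upwards [ae_restrict_of_ae (Measure.ae_ne volume 0)] with t ht
  rw [← ENNReal.ofReal_rpow_of_pos (abs_pos.2 ht), Real.enorm_eq_ofReal_abs]

lemma lintegral_addCircle_enorm_rpow_lt_top (p : ℝ) [hp : Fact (0 < p)] {r : ℝ} (hr : -1 < r) :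
    ∫⁻ z : AddCircle p, ‖z‖ₑ ^ r < ⊤ := by
  rw [← AddCircle.lintegral_preimage p (-(p / 2)), show -(p / 2) + p = p / 2 by ring]
  refine lt_of_eq_of_lt (setLIntegral_congr_fun measurableSet_Ioc fun t ht => ?_)
    (setLIntegral_enorm_rpow_lt_top hr (-(p / 2)) (p / 2))
  have hnorm : ‖(t : AddCircle p)‖ = |t| := by
    rw [AddCircle.norm_coe_eq_abs_iff p hp.out.ne', abs_of_pos hp.out, abs_le]
    exact ⟨ht.1.le, ht.2⟩
  simp only [← ofReal_norm, hnorm, Real.norm_eq_abs]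

lemma lintegral_pi_prod_eq_prod_lintegral {ι : Type*} [Fintype ι] {Ω : ι → Type*}
    [∀ i, MeasurableSpace (Ω i)] (μ : ∀ i, Measure (Ω i)) [∀ i, IsProbabilityMeasure (μ i)]
    {f : ∀ i, Ω i → ℝ≥0∞} (hf : ∀ i, Measurable (f i)) :
    ∫⁻ x, ∏ i, f i (x i) ∂Measure.pi μ = ∏ i, ∫⁻ t, f i t ∂μ i := by
  rw [ProbabilityTheory.lintegral_prod_eq_prod_lintegral_of_indepFun Finset.univ
    (fun i (x : ∀ i, Ω i) => f i (x i))
    (ProbabilityTheory.iIndepFun_pi fun i => (hf i).aemeasurable)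
    fun i => (hf i).comp (measurable_pi_apply i)]
  exact Finset.prod_congr rfl fun i _ => (measurePreserving_eval μ i).lintegral_comp (hf i)

end Integrability

section Cylinder

variable {d : ℕ}

instance isProbabilityMeasure_volume_unitAddCircle :
    IsProbabilityMeasure (volume : Measure (AddCircle (1 : ℝ))) :=
  ⟨UnitAddCircle.measure_univ⟩

instance isAddHaarMeasure_volume_cyl : (volume : Measure (Cyl d)).IsAddHaarMeasure :=
  Measure.prod.instIsAddHaarMeasure volume volume

lemma slab2_eq_univ_prod (a b : ℝ) : slab2 d a b = univ ×ˢ Ioo a b := by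
  ext x
  simp [slab2]

lemma measurableSet_slab2 (a b : ℝ) : MeasurableSet (slab2 d a b) := by
  rw [slab2_eq_univ_prod]
  exact MeasurableSet.univ.prod measurableSet_Ioo

lemma volume_slab2 (a b : ℝ) : volume (slab2 d a b) = ENNReal.ofReal (b - a) := by
  rw [slab2_eq_univ_prod, Measure.volume_eq_prod, Measure.prod_prod, measure_univ, one_mul,
    Real.volume_Ioo]

lemma measurableSet_subgraph {g : Torus d → ℝ} (hg : Measurable g) :
    MeasurableSet (subgraph d g) :=
  measurableSet_le measurable_snd (hg.comp measurable_fst)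

lemma norm_unitAddCircle_le_half (z : AddCircle (1 : ℝ)) : ‖z‖ ≤ 1 / 2 := by
  simpa only [abs_one] using AddCircle.norm_le_half_period (1 : ℝ) (x := z) one_ne_zero

lemma dist_torus_le_half (x y : Torus d) : dist x y ≤ 1 / 2 := by
  refine (dist_pi_le_iff (by norm_num)).2 fun i => ?_
  rw [dist_eq_norm]
  exact norm_unitAddCircle_le_half _

lemma pnorm_neg (z : Cyl d) : pnorm d (-z) = pnorm d z := by
  simp [pnorm]

lemma norm_fst_le_pnorm (z : Cyl d) (i : Fin (d - 1)) : ‖z.1 i‖ ≤ pnorm d z := by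
  refine Real.le_sqrt_of_sq_le (le_add_of_nonneg_of_le (sq_nonneg _) ?_)
  exact Finset.single_le_sum (f := fun j => ‖z.1 j‖ ^ 2) (fun _ _ => sq_nonneg _)
    (Finset.mem_univ i)

lemma abs_snd_le_pnorm (z : Cyl d) : |z.2| ≤ pnorm d z := by
  refine Real.le_sqrt_of_sq_le ?_
  rw [sq_abs]
  exact le_add_of_nonneg_right (Finset.sum_nonneg fun _ _ => sq_nonneg _)

end Cylinder

section Kernel

variable {d : ℕ} {α : ℝ}

/-- The Riesz kernel `‖z‖_♯ ^ (-(d - α))`, the integrand of `Jalpha`. Its value at `z = 0` is `⊤`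
when `α < d`. -/
def rieszKernel (d : ℕ) (α : ℝ) (z : Cyl d) : ℝ≥0∞ :=
  ENNReal.ofReal (pnorm d z) ^ (-((d : ℝ) - α))

lemma rieszKernel_sub_comm (x y : Cyl d) : rieszKernel d α (x - y) = rieszKernel d α (y - x) := by
  rw [rieszKernel, rieszKernel, ← neg_sub y x, pnorm_neg]

lemma rieszKernel_le_prod (hd : d ≠ 0) (hαd : α ≤ d) (z : Cyl d) :
    rieszKernel d α z ≤ (∏ i, ‖z.1 i‖ₑ ^ (-((d - α) / d))) * ‖z.2‖ₑ ^ (-((d - α) / d)) := by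
  set p := ENNReal.ofReal (pnorm d z)
  have hexp : -((d - α) / d) ≤ 0 :=
    neg_nonpos.2 (div_nonneg (sub_nonneg.2 hαd) (Nat.cast_nonneg d))
  have hfst (i : Fin (d - 1)) : ‖z.1 i‖ₑ ≤ p := by
    rw [← ofReal_norm]
    exact ENNReal.ofReal_le_ofReal (norm_fst_le_pnorm z i)
  have hsnd : ‖z.2‖ₑ ≤ p := by
    rw [Real.enorm_eq_ofReal_abs]
    exact ENNReal.ofReal_le_ofReal (abs_snd_le_pnorm z)
  calc rieszKernel d α z
      = (p ^ (-((d - α) / d))) ^ d := by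
        rw [rieszKernel, ← ENNReal.rpow_mul_natCast, neg_mul,
          div_mul_cancel₀ _ (Nat.cast_ne_zero.2 hd)]
    _ = (∏ _i : Fin (d - 1), p ^ (-((d - α) / d))) * p ^ (-((d - α) / d)) := by
        rw [Finset.prod_const, Finset.card_univ, Fintype.card_fin, pow_sub_one_mul hd]
    _ ≤ (∏ i, ‖z.1 i‖ₑ ^ (-((d - α) / d))) * ‖z.2‖ₑ ^ (-((d - α) / d)) :=
        mul_le_mul' (Finset.prod_le_prod' fun i _ => ennreal_rpow_le_rpow_of_nonpos hexp (hfst i))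
          (ennreal_rpow_le_rpow_of_nonpos hexp hsnd)

lemma setLIntegral_rieszKernel_slab2_lt_top (hα : 0 < α) (hαd : α ≤ d) (a b : ℝ) :
    ∫⁻ z in slab2 d a b, rieszKernel d α z < ⊤ := by
  have hd : (0 : ℝ) < d := hα.trans_le hαd
  have hexp : -1 < -((d - α) / d) := by
    rw [neg_lt_neg_iff, div_lt_one hd]
    linarith
  have htorus : ∫⁻ z : Torus d, ∏ i, ‖z i‖ₑ ^ (-((d - α) / d)) < ⊤ := by
    rw [volume_pi, lintegral_pi_prod_eq_prod_lintegral _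
      (f := fun _ t => ‖t‖ₑ ^ (-((d - α) / d))) (fun _ => by fun_prop)]
    exact ENNReal.prod_lt_top fun _ _ => lintegral_addCircle_enorm_rpow_lt_top 1 hexp
  have hline : ∫⁻ t in Ioo a b, ‖t‖ₑ ^ (-((d - α) / d)) < ⊤ :=
    (lintegral_mono_set Ioo_subset_Ioc_self).trans_lt (setLIntegral_enorm_rpow_lt_top hexp a b)
  refine (lintegral_mono (rieszKernel_le_prod (Nat.cast_pos.1 hd).ne' hαd)).trans_lt ?_
  rw [slab2_eq_univ_prod, Measure.volume_eq_prod, ← Measure.prod_restrict, Measure.restrict_univ,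
    lintegral_prod_mul (f := fun z : Torus d => ∏ i, ‖z i‖ₑ ^ (-((d - α) / d)))
      (g := fun t : ℝ => ‖t‖ₑ ^ (-((d - α) / d)))
      (Finset.measurable_fun_prod _ fun _ _ => by fun_prop).aemeasurable (by fun_prop)]
  exact ENNReal.mul_lt_top htorus hline

/-- The value of the Riesz kernel at distance `√(t² + (d - 1) / 4)`, which is the `‖·‖_♯`-diameter
of a slab of height `t`. -/
def slabKernelMin (d : ℕ) (α t : ℝ) : ℝ≥0∞ :=
  ENNReal.ofReal √(t ^ 2 + (d - 1 : ℕ) / 4) ^ (-((d : ℝ) - α))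

lemma slabKernelMin_pos (hαd : α ≤ d) (t : ℝ) : 0 < slabKernelMin d α t := by
  rw [slabKernelMin, ENNReal.rpow_neg, ENNReal.inv_pos]
  exact ENNReal.rpow_ne_top_of_nonneg (sub_nonneg.2 hαd) ENNReal.ofReal_ne_top

lemma slabKernelMin_le_rieszKernel_sub (hαd : α ≤ d) {a b : ℝ} {x y : Cyl d}
    (hx : x ∈ slab2 d a b) (hy : y ∈ slab2 d a b) :
    slabKernelMin d α (b - a) ≤ rieszKernel d α (x - y) := by
  refine ennreal_rpow_le_rpow_of_nonpos (by linarith)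
    (ENNReal.ofReal_le_ofReal (Real.sqrt_le_sqrt (add_le_add ?_ ?_)))
  · rw [sq_le_sq, Prod.snd_sub]
    exact (abs_sub_le_of_le_of_le hx.1.le hx.2.le hy.1.le hy.2.le).trans (le_abs_self _)
  · calc ∑ i, ‖(x - y).1 i‖ ^ 2
        ≤ ∑ _i : Fin (d - 1), (1 / 2 : ℝ) ^ 2 :=
          Finset.sum_le_sum fun i _ =>
            pow_le_pow_left₀ (norm_nonneg _) (norm_unitAddCircle_le_half _) 2
      _ = (d - 1 : ℕ) / 4 := by
          rw [Finset.sum_const, Finset.card_univ, Fintype.card_fin, nsmul_eq_mul]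
          ring

end Kernel

section Interaction

variable {d : ℕ} {α : ℝ} {A B : Set (Cyl d)}

lemma Jalpha_mono {A' B' : Set (Cyl d)} (hA : A ⊆ A') (hB : B ⊆ B') :
    Jalpha d α A B ≤ Jalpha d α A' B' :=
  (lintegral_mono_set hA).trans (lintegral_mono fun _ => lintegral_mono_set hB)

lemma Jalpha_self_add_Jalpha_sdiff_le (hA : MeasurableSet A) (hAB : A ⊆ B) :
    Jalpha d α A A + Jalpha d α (B \ A) A ≤ Jalpha d α B B :=
  calc Jalpha d α A A + Jalpha d α (B \ A) A
      ≤ Jalpha d α (B ∩ A) B + Jalpha d α (B \ A) B :=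
        add_le_add (Jalpha_mono (subset_inter hAB Subset.rfl) hAB) (Jalpha_mono Subset.rfl hAB)
    _ = Jalpha d α B B := lintegral_inter_add_sdiff _ _ hA

lemma Jalpha_preimage_add_right (v : Cyl d) (A B : Set (Cyl d)) :
    Jalpha d α ((· + v) ⁻¹' A) ((· + v) ⁻¹' B) = Jalpha d α A B := by
  have hv : MeasurePreserving (· + v) (volume : Measure (Cyl d)) volume :=
    measurePreserving_add_right volume v
  have hemb : MeasurableEmbedding (· + v) := measurableEmbedding_addRight v
  rw [Jalpha, Jalpha, ← hv.setLIntegral_comp_preimage_emb hemb _ A]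
  refine lintegral_congr fun x => ?_
  rw [← hv.setLIntegral_comp_preimage_emb hemb _ B]
  simp only [add_sub_add_right_eq_sub]

lemma slabKernelMin_mul_volume_le_Jalpha (hαd : α ≤ d) {a b : ℝ} (hA : MeasurableSet A)
    (hB : MeasurableSet B) (hAS : A ⊆ slab2 d a b) (hBS : B ⊆ slab2 d a b) :
    slabKernelMin d α (b - a) * volume B * volume A ≤ Jalpha d α A B := by
  rw [← setLIntegral_const]
  refine setLIntegral_mono' hA fun x hx => ?_
  rw [← setLIntegral_const]
  exact setLIntegral_mono' hB fun y hy =>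
    slabKernelMin_le_rieszKernel_sub hαd (hAS hx) (hBS hy)

lemma Jalpha_slab2_lt_top (hα : 0 < α) (hαd : α ≤ d) (a b : ℝ) :
    Jalpha d α (slab2 d a b) (slab2 d a b) < ⊤ := by
  have hpotential : ∀ x ∈ slab2 d a b, ∫⁻ y in slab2 d a b, rieszKernel d α (x - y) ≤
      ∫⁻ z in slab2 d (a - b) (b - a), rieszKernel d α z := fun x hx => by
    have hsub : slab2 d a b ⊆ (· - x) ⁻¹' slab2 d (a - b) (b - a) := fun y hy =>
      ⟨sub_lt_sub hy.1 hx.2, sub_lt_sub hy.2 hx.1⟩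
    simp only [rieszKernel_sub_comm x]
    rw [← (measurePreserving_sub_right volume x).setLIntegral_comp_preimage_emb
      (measurableEmbedding_subRight x) _ (slab2 d (a - b) (b - a))]
    exact lintegral_mono_set hsub
  refine (setLIntegral_mono' (measurableSet_slab2 a b) hpotential).trans_lt ?_
  rw [setLIntegral_const, volume_slab2]
  exact ENNReal.mul_lt_top (setLIntegral_rieszKernel_slab2_lt_top hα hαd _ _)
    ENNReal.ofReal_lt_top

end Interaction

section SlabPerimeter

variable {d : ℕ} {α a : ℝ} {g : Torus d → ℝ}

lemma PalphaSlab_add_Jalpha_sdiff_le (hα : 0 < α) (hαd : α ≤ d) {b : ℝ} {E F : Set (Cyl d)}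
    (hE : MeasurableSet E) (hEF : E ⊆ F) :
    PalphaSlab d α a b F + Jalpha d α ((F \ E) ∩ slab2 d a b) (E ∩ slab2 d a b) ≤
      PalphaSlab d α a b E := by
  have hsplit := Jalpha_self_add_Jalpha_sdiff_le (α := α) (hE.inter (measurableSet_slab2 a b))
    (inter_subset_inter_left (slab2 d a b) hEF)
  rw [← inter_sdiff_distrib_right] at hsplit
  have hle (G : Set (Cyl d)) : Jalpha d α (G ∩ slab2 d a b) (G ∩ slab2 d a b) ≤
      Jalpha d α (slab2 d a b) (slab2 d a b) := Jalpha_mono inter_subset_right inter_subset_right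
  have hfin := ((hle E).trans_lt (Jalpha_slab2_lt_top hα hαd a b)).ne
  refine ENNReal.le_sub_of_add_le_right hfin ?_
  rw [add_assoc, add_comm (Jalpha d α ((F \ E) ∩ slab2 d a b) _)]
  exact (add_le_add_right hsplit _).trans (tsub_add_cancel_of_le (hle F)).le

lemma PalphaSlab_subgraph_add_const (c b : ℝ) :
    PalphaSlab d α (a + c) (b + c) (subgraph d fun x => g x + c) =
      PalphaSlab d α a b (subgraph d g) := by
  have hslab : (· + ((0, c) : Cyl d)) ⁻¹' slab2 d (a + c) (b + c) = slab2 d a b := by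
    ext x
    simp [slab2]
  have hsub : (· + ((0, c) : Cyl d)) ⁻¹' (subgraph d fun x => g x + c) = subgraph d g := by
    ext x
    simp [subgraph]
  rw [PalphaSlab, ← Jalpha_preimage_add_right (0, c) (slab2 d _ _),
    ← Jalpha_preimage_add_right (0, c) (_ ∩ _), preimage_inter, hslab, hsub, PalphaSlab]

lemma PalphaSlab_subgraph_add_lintegral_sub_le (hα : 0 < α) (hαd : α ≤ d) {h : Torus d → ℝ}
    {M ℓ : ℝ} (hg : Measurable g) (hh : Measurable h) (hgh : g ≤ h) (hhM : ∀ x, h x ≤ M)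
    (hgℓ : ∀ x, M - ℓ ≤ g x) (ha : a ≤ M - ℓ - 1) :
    PalphaSlab d α a M (subgraph d h) +
        slabKernelMin d α (ℓ + 1) * ∫⁻ x, ENNReal.ofReal (h x - g x) ≤
      PalphaSlab d α a M (subgraph d g) := by
  set D := regionBetween g h univ
  set B := slab2 d (M - ℓ - 1) (M - ℓ)
  have hℓ : 0 ≤ ℓ := by linarith [hgℓ 0, hgh 0, hhM 0]
  have hDS : D ⊆ slab2 d (M - ℓ - 1) M := fun x hx =>
    ⟨by linarith [hgℓ x.1, hx.2.1], hx.2.2.trans_le (hhM x.1)⟩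
  have hBS : B ⊆ slab2 d (M - ℓ - 1) M := fun x hx => ⟨hx.1, by linarith [hx.2]⟩
  have hSa : slab2 d (M - ℓ - 1) M ⊆ slab2 d a M := fun x hx => ⟨ha.trans_lt hx.1, hx.2⟩
  have hD : D ⊆ (subgraph d h \ subgraph d g) ∩ slab2 d a M :=
    subset_inter (fun x hx => ⟨hx.2.2.le, hx.2.1.not_ge⟩) (hDS.trans hSa)
  have hB : B ⊆ subgraph d g ∩ slab2 d a M :=
    subset_inter (fun x hx => hx.2.le.trans (hgℓ x.1)) (hBS.trans hSa)
  have hvolD : volume D = ∫⁻ x, ENNReal.ofReal (h x - g x) := by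
    rw [Measure.volume_eq_prod, volume_regionBetween_eq_lintegral hg.aemeasurable hh.aemeasurable
      MeasurableSet.univ, Measure.restrict_univ]
    rfl
  have hJ := slabKernelMin_mul_volume_le_Jalpha hαd
    (measurableSet_regionBetween hg hh MeasurableSet.univ) (measurableSet_slab2 _ _) hDS hBS
  rw [volume_slab2, sub_sub_cancel, ENNReal.ofReal_one, mul_one, hvolD,
    show M - (M - ℓ - 1) = ℓ + 1 by ring] at hJ
  calc PalphaSlab d α a M (subgraph d h) +
        slabKernelMin d α (ℓ + 1) * ∫⁻ x, ENNReal.ofReal (h x - g x)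
      ≤ PalphaSlab d α a M (subgraph d h) +
          Jalpha d α ((subgraph d h \ subgraph d g) ∩ slab2 d a M) (subgraph d g ∩ slab2 d a M) :=
        add_le_add_right (hJ.trans (Jalpha_mono hD hB)) _
    _ ≤ PalphaSlab d α a M (subgraph d g) :=
        PalphaSlab_add_Jalpha_sdiff_le hα hαd (measurableSet_subgraph hg)
          fun x hx => le_trans hx (hgh x.1)

end SlabPerimeter

section Perimeter

variable {d : ℕ} {α M : ℝ} {g : Torus d → ℝ}

lemma setOf_subgraph_subset_halfspace (hM : IsGreatest (range g) M) :
    {ρ : ℝ | subgraph d g ⊆ {x : Cyl d | x.2 < ρ}} = Ioi M := by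
  obtain ⟨⟨x₀, rfl⟩, hmax⟩ := hM
  ext ρ
  refine ⟨fun hρ => @hρ (x₀, g x₀) (le_refl (g x₀)), fun hρ x hx => ?_⟩
  exact (le_trans hx (hmax (mem_range_self x.1))).trans_lt hρ

lemma Palpha_subgraph_eq_limsup (hM : IsGreatest (range g) M) :
    Palpha d α (subgraph d g) =
      limsup (fun R : ℝ => PalphaSlab d α (-R) M (subgraph d g)) atTop := by
  have hset := setOf_subgraph_subset_halfspace hM
  have hne : subgraph d g ≠ ∅ := nonempty_iff_ne_empty.1 ⟨(0, g 0), le_refl (g 0)⟩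
  have hbdd : BddTop d (subgraph d g) :=
    ⟨M + 1, (Set.ext_iff.1 hset (M + 1)).2 (lt_add_one M)⟩
  rw [Palpha, if_neg hne, if_pos hbdd, rhoSup, hset, csInf_Ioi]

lemma Palpha_subgraph_add_const (hM : IsGreatest (range g) M) (c : ℝ) :
    Palpha d α (subgraph d fun x => g x + c) = Palpha d α (subgraph d g) := by
  have hMc : IsGreatest (range fun x => g x + c) (M + c) := by
    obtain ⟨⟨x₀, rfl⟩, hmax⟩ := hM
    exact ⟨⟨x₀, rfl⟩, forall_mem_range.2 fun x => add_le_add_left (hmax (mem_range_self x)) c⟩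
  have hshift (R : ℝ) : PalphaSlab d α (-R) (M + c) (subgraph d fun x => g x + c) =
      PalphaSlab d α (-(R + c)) M (subgraph d g) := by
    rw [← PalphaSlab_subgraph_add_const c M, show -(R + c) + c = -R by ring]
  rw [Palpha_subgraph_eq_limsup hMc, Palpha_subgraph_eq_limsup hM]
  simp only [hshift]
  conv_rhs => rw [← map_add_atTop_eq c, ← limsup_comp, Function.comp_def]

theorem Palpha_subgraph_contract_add_lintegral_le (hα : 0 < α) (hαd : α ≤ d) {ℓ ε : ℝ}
    (hg : Measurable g) (hM : IsGreatest (range g) M) (hgℓ : ∀ x, M - ℓ ≤ g x) (hε₀ : 0 ≤ ε)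
    (hε₁ : ε ≤ 1) :
    Palpha d α (subgraph d fun x => (1 - ε) * g x) +
        slabKernelMin d α (ℓ + 1) * (ENNReal.ofReal ε * ∫⁻ x, ENNReal.ofReal (M - g x)) ≤
      Palpha d α (subgraph d g) := by
  have hgM (x : Torus d) : g x ≤ M := hM.2 (mem_range_self x)
  have hMε : IsGreatest (range fun x => (1 - ε) * g x) ((1 - ε) * M) := by
    obtain ⟨x₀, hx₀⟩ := hM.1
    exact ⟨⟨x₀, by simp only [hx₀]⟩,
      forall_mem_range.2 fun x => mul_le_mul_of_nonneg_left (hgM x) (sub_nonneg.2 hε₁)⟩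
  have hMh : IsGreatest (range fun x => (1 - ε) * g x + ε * M) M := by
    obtain ⟨x₀, hx₀⟩ := hM.1
    exact ⟨⟨x₀, by simp only [hx₀]; ring⟩, forall_mem_range.2 fun x => by nlinarith [hgM x]⟩
  have hgap : ∫⁻ x, ENNReal.ofReal ((1 - ε) * g x + ε * M - g x) =
      ENNReal.ofReal ε * ∫⁻ x, ENNReal.ofReal (M - g x) := by
    rw [← lintegral_const_mul _ (by fun_prop)]
    refine lintegral_congr fun x => ?_
    rw [← ENNReal.ofReal_mul hε₀]
    ring_nf
  rw [← Palpha_subgraph_add_const hMε (ε * M), Palpha_subgraph_eq_limsup hMh,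
    Palpha_subgraph_eq_limsup hM, ← hgap,
    ← limsup_add_const _ _ _ (by isBoundedDefault) (by isBoundedDefault)]
  refine limsup_le_limsup ?_ (by isBoundedDefault) (by isBoundedDefault)
  filter_upwards [eventually_ge_atTop (-(M - ℓ - 1))] with R hR
  exact PalphaSlab_subgraph_add_lintegral_sub_le hα hαd hg (by fun_prop)
    (fun x => by nlinarith [hgM x]) (fun x => hMh.2 (mem_range_self x)) hgℓ (neg_le.1 hR)

end Perimeter

section Lipschitz

lemma ofReal_mul_measure_ball_le_lintegral_sub {X : Type*} [PseudoMetricSpace X]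
    [MeasurableSpace X] [OpensMeasurableSpace X] (μ : Measure X) {K : NNReal} {g : X → ℝ}
    (hg : LipschitzWith K g) {x₁ : X} {r s M : ℝ} (h : g x₁ + K * r + s ≤ M) :
    ENNReal.ofReal s * μ (Metric.ball x₁ r) ≤ ∫⁻ x, ENNReal.ofReal (M - g x) ∂μ := by
  rw [← setLIntegral_const]
  refine (setLIntegral_mono' measurableSet_ball fun x hx => ENNReal.ofReal_le_ofReal ?_).trans
    (setLIntegral_le_lintegral _ _)
  have hlip := hg.le_add_mul x x₁
  have hdist : K * dist x x₁ ≤ K * r :=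
    mul_le_mul_of_nonneg_left (Metric.mem_ball.1 hx).le K.coe_nonneg
  linarith

variable {d : ℕ} {g : Torus d → ℝ}

lemma osc_eq_sub {M m : ℝ} (hM : IsGreatest (range g) M) (hm : IsLeast (range g) m) :
    osc d g = M - m := by
  rw [osc, iSup, iInf, hM.csSup_eq, hm.csInf_eq]

lemma sub_half_le_of_lipschitzWith {K : NNReal} (hg : LipschitzWith K g) {M : ℝ}
    (hM : M ∈ range g) (x : Torus d) : M - K / 2 ≤ g x := by
  obtain ⟨x₀, rfl⟩ := hM
  have hdist := mul_le_mul_of_nonneg_left (dist_torus_le_half x₀ x) K.coe_nonneg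
  linarith [hg.le_add_mul x₀ x]

lemma ofReal_mul_volume_ball_le_lintegral_sub_of_le_osc {K : NNReal} (hK : K ≠ 0)
    (hg : LipschitzWith K g) {δ M : ℝ} (hosc : δ ≤ osc d g) (hM : IsGreatest (range g) M) :
    ENNReal.ofReal (δ / 2) * volume (Metric.ball (0 : Torus d) (δ / (2 * K))) ≤
      ∫⁻ x, ENNReal.ofReal (M - g x) := by
  obtain ⟨m, hm⟩ := (isCompact_range hg.continuous).exists_isLeast (range_nonempty g)
  rw [osc_eq_sub hM hm] at hosc
  obtain ⟨x₁, rfl⟩ := hm.1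
  rw [← Measure.addHaar_ball_center volume x₁]
  refine ofReal_mul_measure_ball_le_lintegral_sub volume hg ?_
  have hKr : K * (δ / (2 * K)) = δ / 2 := by
    have hK' : (K : ℝ) ≠ 0 := NNReal.coe_ne_zero.2 hK
    field_simp
  linarith

end Lipschitz

/-- The `α`-Riesz perimeter satisfies assumption (H). -/
theorem Palpha_assumptionH (d : ℕ) (hd : 2 ≤ d) (α : ℝ) (hα : 0 < α)
    (hα' : α < (d : ℝ) - 1) (L δ : ℝ) (hL : 0 < L) (hδ : 0 < δ) :
    ∃ ε₀ ∈ Set.Ioo (0:ℝ) 1, ∃ C : ℝ, 0 < C ∧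
      ∀ g : Torus d → ℝ, LipschitzWith (Real.toNNReal L) g → δ ≤ osc d g →
        ∀ ε : ℝ, 0 < ε → ε ≤ ε₀ →
          Palpha d α (subgraph d (fun x => (1 - ε) * g x)) + ENNReal.ofReal (C * ε)
            ≤ Palpha d α (subgraph d g) := by
  lift L to NNReal using hL.le
  rw [Real.toNNReal_coe]
  have hαd : α ≤ d := by linarith
  have hpos : 0 < slabKernelMin d α (L / 2 + 1) *
      (ENNReal.ofReal (δ / 2) * volume (Metric.ball (0 : Torus d) (δ / (2 * L)))) :=
    ENNReal.mul_pos (slabKernelMin_pos hαd _).ne' (ENNReal.mul_pos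
      (ENNReal.ofReal_pos.2 (half_pos hδ)).ne'
      (Metric.measure_ball_pos _ _ (by positivity)).ne').ne'
  obtain ⟨C, -, hC₀, hC⟩ := ENNReal.lt_iff_exists_real_btwn.1 hpos
  refine ⟨1 / 2, by norm_num, C, ENNReal.ofReal_pos.1 hC₀, fun g hg hosc ε hε hε₀ => ?_⟩
  obtain ⟨M, hM⟩ := (isCompact_range hg.continuous).exists_isGreatest (range_nonempty g)
  refine le_trans (add_le_add_right ?_ _) (Palpha_subgraph_contract_add_lintegral_le hα hαd
    hg.continuous.measurable hM (sub_half_le_of_lipschitzWith hg hM.1) hε.le (by linarith))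
  rw [mul_comm C, ENNReal.ofReal_mul hε.le, mul_left_comm]
  gcongr
  exact hC.le.trans (mul_le_mul_right (ofReal_mul_volume_ball_le_lintegral_sub_of_le_osc
    (NNReal.coe_pos.1 hL).ne' hg hosc hM) _)
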